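/- arXiv:2312.01782 — 7 statements merged into one kernel-verified Lean document; each statement's English description precedes it below -/
import Mathlib

section
/- Let n ≥ 1, let Q : ℝ → Matrix (Fin n) (Fin n) ℝ be a differentiable family of invertible matrices and let λ₁, …, λₙ : ℝ → ℝ be differentiable functions such that, for some fixed m, λ_i(t) = 0 for all i < m and λ_i(t) > 0 for all i ≥ m and all t. Set D(t) := diag(λ₁(t), …, λₙ(t)) and L(t) := Q(t)⁻¹ · D(t) · Q(t). Then for every t, d/dt log(∏_{i=m}^{n} λ_i(t)) = lim_{δ → 0⁺} tr(L'(t) · (L(t) + δ·I)⁻¹). -/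
open Matrix Filter

/-!
By Jacobi's formula, `tr (L' (L + δI)⁻¹)` is the logarithmic derivative of `det (L + δI)`. This
determinant is `∏ᵢ (λᵢ + δ)`, so the trace equals `∑ᵢ λᵢ' / (λᵢ + δ)`. Identically vanishing
eigenvalues contribute nothing to the sum, and letting `δ → 0` in the remaining terms gives the
logarithmic derivative of the product of the others. The conjugating matrices `Q` drop out because
the determinant is invariant under conjugation.
-/

section

open Polynomial Topology

variable {ι : Type*} [Fintype ι] [DecidableEq ι]

theorem prod_updateCol_apply {κ M : Type*} [CommMonoid M] (A : Matrix κ ι M) (i : ι) (b : κ → M)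
    (σ : ι → κ) :
    ∏ j, A.updateCol i b (σ j) j = (∏ j ∈ Finset.univ.erase i, A (σ j) j) * b (σ i) := by
  rw [← Finset.prod_erase_mul _ _ (Finset.mem_univ i), updateCol_self]
  congr 1
  exact Finset.prod_congr rfl fun j hj => updateCol_ne (Finset.ne_of_mem_erase hj)

section Algebra

variable {R : Type*} [CommRing R]

theorem trace_mul_adjugate (A B : Matrix ι ι R) :
    (A * B.adjugate).trace = ∑ i, (B.updateCol i (A.col i)).det := by
  rw [trace_mul_comm]
  refine Finset.sum_congr rfl fun i _ => ?_
  rw [← cramer_apply, cramer_eq_adjugate_mulVec]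
  rfl

theorem det_add_smul_one_of_charpoly_eq_prod {M : Matrix ι ι R} {μ : ι → R}
    (hM : M.charpoly = ∏ i, (X - C (μ i))) (δ : R) :
    (M + δ • (1 : Matrix ι ι R)).det = ∏ i, (μ i + δ) := by
  have hneg : M + δ • (1 : Matrix ι ι R) = -(scalar ι (-δ) - M) := by
    rw [map_neg, scalar_apply, smul_one_eq_diagonal]
    abel
  rw [hneg, det_neg, ← eval_charpoly, hM, eval_prod, ← Finset.card_univ, ← Finset.prod_const,
    ← Finset.prod_mul_distrib]
  refine Finset.prod_congr rfl fun i _ => ?_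
  simp only [eval_sub, eval_X, eval_C]
  ring

theorem charpoly_inv_mul_diagonal_mul {Q : Matrix ι ι R} (hQ : IsUnit Q) (d : ι → R) :
    (Q⁻¹ * diagonal d * Q).charpoly = ∏ i, (X - C (d i)) := by
  obtain ⟨U, rfl⟩ := hQ
  rw [charpoly_units_conj', charpoly_diagonal]

end Algebra

section Deriv

variable {𝕜 : Type*} [NontriviallyNormedField 𝕜] {t : 𝕜}

theorem hasDerivAt_det {R : Type*} [NormedCommRing R] [NormedAlgebra 𝕜 R]
    {A : 𝕜 → Matrix ι ι R} {A' : Matrix ι ι R}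
    (hA : ∀ i j, HasDerivAt (fun s => A s i j) (A' i j) t) :
    HasDerivAt (fun s => (A s).det) (A' * (A t).adjugate).trace t := by
  have hexpand : (A' * (A t).adjugate).trace = ∑ σ : Equiv.Perm ι,
      (σ.sign : ℤ) * ∑ i, (∏ j ∈ Finset.univ.erase i, A t (σ j) j) * A' (σ i) i := by
    simp only [trace_mul_adjugate, det_apply', prod_updateCol_apply, Finset.mul_sum, col_apply]
    exact Finset.sum_comm
  simp only [det_apply', hexpand, ← smul_eq_mul (a := Finset.prod _ _)]
  exact HasDerivAt.fun_sum fun σ _ =>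
    (HasDerivAt.fun_finsetProd fun i _ => hA (σ i) i).const_mul _

variable {𝔽 : Type*} [NontriviallyNormedField 𝔽] [NormedAlgebra 𝕜 𝔽]

theorem logDeriv_det {A : 𝕜 → Matrix ι ι 𝔽} {A' : Matrix ι ι 𝔽}
    (hA : ∀ i j, HasDerivAt (fun s => A s i j) (A' i j) t) :
    logDeriv (fun s => (A s).det) t = (A' * (A t)⁻¹).trace := by
  rw [logDeriv_apply, (hasDerivAt_det hA).deriv, inv_def, Ring.inverse_eq_inv', Matrix.mul_smul,
    trace_smul, smul_eq_mul, div_eq_inv_mul]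

theorem differentiableAt_det {R : Type*} [NormedCommRing R] [NormedAlgebra 𝕜 R]
    {A : 𝕜 → Matrix ι ι R} (hA : ∀ i j, DifferentiableAt 𝕜 (fun s => A s i j) t) :
    DifferentiableAt 𝕜 (fun s => (A s).det) t :=
  (hasDerivAt_det (A' := of fun i j => deriv (fun s => A s i j) t)
    fun i j => (hA i j).hasDerivAt).differentiableAt

theorem differentiableAt_inv_apply {A : 𝕜 → Matrix ι ι 𝔽}
    (hA : ∀ i j, DifferentiableAt 𝕜 (fun s => A s i j) t) (hunit : IsUnit (A t)) (i j : ι) :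
    DifferentiableAt 𝕜 (fun s => (A s)⁻¹ i j) t := by
  have hdet : (A t).det ≠ 0 := ((isUnit_iff_isUnit_det _).1 hunit).ne_zero
  have hadjugate : DifferentiableAt 𝕜 (fun s => (A s).adjugate i j) t := by
    simp only [adjugate_apply]
    refine differentiableAt_det fun k l => ?_
    rcases eq_or_ne k j with rfl | hk
    · simp only [updateRow_self, differentiableAt_const]
    · simpa only [updateRow_ne hk] using hA k l
  simp only [inv_def, Ring.inverse_eq_inv', Matrix.smul_apply, smul_eq_mul]
  exact ((differentiableAt_det hA).fun_inv hdet).fun_mul hadjugate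

theorem differentiableAt_mul_apply {l m n R : Type*} [Fintype m] [NormedRing R] [NormedAlgebra 𝕜 R]
    {A : 𝕜 → Matrix l m R} {B : 𝕜 → Matrix m n R}
    (hA : ∀ i j, DifferentiableAt 𝕜 (fun s => A s i j) t)
    (hB : ∀ i j, DifferentiableAt 𝕜 (fun s => B s i j) t) (i : l) (j : n) :
    DifferentiableAt 𝕜 (fun s => (A s * B s) i j) t := by
  simp only [mul_apply]
  exact DifferentiableAt.fun_sum fun k _ => (hA i k).fun_mul (hB k j)

theorem differentiableAt_inv_mul_diagonal_mul_apply {Q : 𝕜 → Matrix ι ι 𝔽} {d : ι → 𝕜 → 𝔽}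
    (hQ : ∀ i j, DifferentiableAt 𝕜 (fun s => Q s i j) t) (hunit : IsUnit (Q t))
    (hd : ∀ i, DifferentiableAt 𝕜 (d i) t) (i j : ι) :
    DifferentiableAt 𝕜 (fun s => ((Q s)⁻¹ * diagonal (fun k => d k s) * Q s) i j) t := by
  have hdiagonal (i j : ι) : DifferentiableAt 𝕜 (fun s => diagonal (fun k => d k s) i j) t := by
    rcases eq_or_ne i j with rfl | hij
    · simpa only [diagonal_apply_eq] using hd i
    · simp only [diagonal_apply_ne _ hij, differentiableAt_const]
  exact differentiableAt_mul_apply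
    (differentiableAt_mul_apply (differentiableAt_inv_apply hQ hunit) hdiagonal) hQ i j

theorem trace_mul_inv_add_smul_one {L : 𝕜 → Matrix ι ι 𝔽} {L' : Matrix ι ι 𝔽} {lam : ι → 𝕜 → 𝔽}
    (hL : ∀ i j, HasDerivAt (fun s => L s i j) (L' i j) t)
    (hlam : ∀ i, DifferentiableAt 𝕜 (lam i) t)
    (hchar : ∀ᶠ s in 𝓝 t, (L s).charpoly = ∏ i, (X - C (lam i s)))
    {δ : 𝔽} (hδ : ∀ i, lam i t + δ ≠ 0) :
    (L' * (L t + δ • (1 : Matrix ι ι 𝔽))⁻¹).trace = ∑ i, deriv (lam i) t / (lam i t + δ) := by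
  have hdet : (fun s => (L s + δ • (1 : Matrix ι ι 𝔽)).det) =ᶠ[𝓝 t]
      fun s => ∏ i, (lam i s + δ) :=
    hchar.mono fun s hs => det_add_smul_one_of_charpoly_eq_prod hs δ
  rw [← logDeriv_det (A := fun s => L s + δ • (1 : Matrix ι ι 𝔽))
      fun i j => (hL i j).add_const _, (logDeriv_congr_nhds hdet).eq_of_nhds,
    logDeriv_prod (f := fun i s => lam i s + δ) (fun i _ => hδ i)
      fun i _ => (hlam i).add_const δ]
  simp only [logDeriv_apply, deriv_add_const]

theorem eventually_nhdsNE_add_ne_zero (a : 𝔽) : ∀ᶠ δ in 𝓝[≠] (0 : 𝔽), a + δ ≠ 0 := by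
  rcases eq_or_ne a 0 with rfl | ha
  · filter_upwards [self_mem_nhdsWithin] with δ hδ
    rwa [zero_add]
  · filter_upwards [eventually_ne_nhdsWithin (neg_ne_zero.2 ha).symm] with δ hδ hsum
    exact hδ (eq_neg_of_add_eq_zero_right hsum)

theorem deriv_log_prod_pos_eigenvalues_general
    {L : 𝕜 → Matrix ι ι 𝔽} {L' : Matrix ι ι 𝔽} {lam : ι → 𝕜 → 𝔽} (S : Finset ι)
    (hL : ∀ i j, HasDerivAt (fun s => L s i j) (L' i j) t)
    (hlam : ∀ i, DifferentiableAt 𝕜 (lam i) t)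
    (hchar : ∀ᶠ s in 𝓝 t, (L s).charpoly = ∏ i, (X - C (lam i s)))
    (hconst : ∀ i ∉ S, deriv (lam i) t = 0) (hne : ∀ i ∈ S, lam i t ≠ 0) :
    Tendsto (fun δ : 𝔽 => (L' * (L t + δ • (1 : Matrix ι ι 𝔽))⁻¹).trace) (𝓝[≠] 0)
      (𝓝 (logDeriv (fun s => ∏ i ∈ S, lam i s) t)) := by
  have htrace : ∀ᶠ δ in 𝓝[≠] (0 : 𝔽), ∑ i ∈ S, deriv (lam i) t / (lam i t + δ) =
      (L' * (L t + δ • (1 : Matrix ι ι 𝔽))⁻¹).trace := by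
    filter_upwards [eventually_all.2 fun i => eventually_nhdsNE_add_ne_zero (lam i t)] with δ hδ
    rw [trace_mul_inv_add_smul_one hL hlam hchar hδ]
    exact Finset.sum_subset (Finset.subset_univ S) fun i _ hi => by
      rw [hconst i hi, zero_div]
  have hterm (i : ι) (hi : i ∈ S) : Tendsto (fun δ => deriv (lam i) t / (lam i t + δ)) (𝓝[≠] 0)
      (𝓝 (logDeriv (lam i) t)) := by
    have hcont : ContinuousAt (fun δ => deriv (lam i) t / (lam i t + δ)) 0 :=
      continuousAt_const.div (by fun_prop) (by simpa only [add_zero] using hne i hi)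
    simpa only [add_zero, logDeriv_apply] using hcont.tendsto.mono_left nhdsWithin_le_nhds
  rw [logDeriv_prod hne fun i _ => hlam i]
  exact (tendsto_finsetSum S hterm).congr' htrace

end Deriv

end

/-- Derivative of the log of the product of the nonzero eigenvalues of a family
`L(t) = Q(t)⁻¹ D(t) Q(t)` of constant rank equals `lim_{δ→0⁺} tr(L'(t) (L(t)+δI)⁻¹)`. -/
theorem deriv_log_prod_pos_eigenvalues
    (n m : ℕ) (hn : 1 ≤ n)
    (Q : ℝ → Matrix (Fin n) (Fin n) ℝ)
    (hQdiff : ∀ i j, Differentiable ℝ fun t => Q t i j)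
    (hQinv : ∀ t, IsUnit (Q t))
    (lam : Fin n → ℝ → ℝ)
    (hlamdiff : ∀ i, Differentiable ℝ (lam i))
    (hlamzero : ∀ (t : ℝ) (i : Fin n), (i : ℕ) < m → lam i t = 0)
    (hlampos : ∀ (t : ℝ) (i : Fin n), m ≤ (i : ℕ) → 0 < lam i t)
    (D : ℝ → Matrix (Fin n) (Fin n) ℝ)
    (hD : ∀ t, D t = Matrix.diagonal fun i => lam i t)
    (L : ℝ → Matrix (Fin n) (Fin n) ℝ)
    (hL : ∀ t, L t = (Q t)⁻¹ * D t * Q t)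
    (t : ℝ) :
    Tendsto
      (fun δ : ℝ =>
        Matrix.trace
          ((Matrix.of fun i j => deriv (fun s => L s i j) t) *
            (L t + δ • (1 : Matrix (Fin n) (Fin n) ℝ))⁻¹))
      (nhdsWithin 0 (Set.Ioi 0))
      (nhds (deriv
        (fun s => Real.log
          (∏ i ∈ Finset.univ.filter (fun i : Fin n => m ≤ (i : ℕ)), lam i s)) t)) := by
  obtain rfl : D = fun s => diagonal fun i => lam i s := funext hD
  obtain rfl : L = fun s => (Q s)⁻¹ * diagonal (fun i => lam i s) * Q s := funext hL
  have hne : ∀ i ∈ Finset.univ.filter (fun i : Fin n => m ≤ (i : ℕ)), lam i t ≠ 0 :=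
    fun i hi => (hlampos t i ((Finset.mem_filter_univ i).1 hi)).ne'
  have hconst : ∀ i ∉ Finset.univ.filter (fun i : Fin n => m ≤ (i : ℕ)), deriv (lam i) t = 0 := by
    intro i hi
    rw [Finset.mem_filter_univ, not_le] at hi
    rw [funext fun s => hlamzero s i hi, deriv_const]
  have hderiv := differentiableAt_inv_mul_diagonal_mul_apply (fun i j => hQdiff i j t) (hQinv t)
    fun i => hlamdiff i t
  have hlog := Real.deriv_log_comp_eq_logDeriv
    (DifferentiableAt.fun_finsetProd fun i _ => hlamdiff i t) (Finset.prod_ne_zero_iff.2 hne)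
  exact hlog ▸ (deriv_log_prod_pos_eigenvalues_general _ (fun i j => (hderiv i j).hasDerivAt)
    (fun i => hlamdiff i t) (.of_forall fun s => charpoly_inv_mul_diagonal_mul (hQinv s) _)
    hconst hne).mono_left (nhdsWithin_mono _ fun δ hδ => hδ.ne')
end

section
/- Let Q : ℝ → Matrix (Fin n) (Fin n) ℝ be a differentiable family of invertible matrices, D : ℝ → Matrix (Fin n) (Fin n) ℝ a differentiable family of invertible diagonal matrices, and M(t) := Q(t)⁻¹ · D(t) · Q(t). Then for every t, tr(M'(t) · M(t)⁻¹) = tr(D'(t) · D(t)⁻¹). -/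
open Matrix

/-!
Jacobi's formula gives `(det A)' = det A * tr (A' A⁻¹)` for invertible `A`, so `tr (A' A⁻¹)` is
the logarithmic derivative of `det A`. Conjugation does not change the determinant, hence
`M = Q⁻¹ D Q` and `D` have the same logarithmic derivative.
-/

open Filter Topology

theorem trace_mul_adjugate_eq_sum_det_updateRow {m R : Type*} [Fintype m] [DecidableEq m]
    [CommRing R] (A B : Matrix m m R) :
    trace (B * adjugate A) = ∑ i, (A.updateRow i (B i)).det := by
  refine Finset.sum_congr rfl fun i _ => ?_
  -- Replacing row `i` does not affect the cofactors along that row.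
  calc (B * adjugate A) i i
      = ∑ k, B i k * (A.updateRow i (B i)).adjugate k i := by
        simp [mul_apply, adjugate_apply]
    _ = (A.updateRow i (B i)).det := by
        simp [det_eq_sum_mul_adjugate_row _ i]

theorem eventually_isUnit_matrix {X m K : Type*} [TopologicalSpace X] [Fintype m] [DecidableEq m]
    [Field K] [TopologicalSpace K] [IsTopologicalRing K] [T1Space K] {A : X → Matrix m m K} {x : X}
    (hA : ContinuousAt A x) (hAx : IsUnit (A x)) : ∀ᶠ y in 𝓝 x, IsUnit (A y) := by
  simp only [isUnit_iff_isUnit_det, isUnit_iff_ne_zero] at hAx ⊢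
  exact (continuous_id.matrix_det.continuousAt.comp hA).eventually_ne hAx

/-- The determinant as a continuous multilinear map of the rows, so that the derivative of a
multilinear map applies to it. -/
def detRowContinuousMultilinear (R m : Type*) [CommRing R] [TopologicalSpace R]
    [IsTopologicalRing R] [Fintype m] [DecidableEq m] :
    ContinuousMultilinearMap R (fun _ : m => m → R) R where
  toMultilinearMap := (detRowAlternating (R := R) (n := m)).toMultilinearMap
  cont := Continuous.matrix_det continuous_id

-- Derivatives of matrix families refer to the product topology; no matrix norm is chosen.
section Differentiable

variable {𝕜 E l m n : Type*} [NontriviallyNormedField 𝕜] [NormedAddCommGroup E] [NormedSpace 𝕜 E]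
  {x : E}

theorem differentiableAt_matrix [Finite m] [Finite n] {A : E → Matrix m n 𝕜} :
    DifferentiableAt 𝕜 A x ↔ ∀ i j, DifferentiableAt 𝕜 (fun y => A y i j) x :=
  have := Fintype.ofFinite m
  have := Fintype.ofFinite n
  differentiableAt_pi.trans <| forall_congr' fun _ => differentiableAt_pi

theorem differentiableAt_matrix_mul [Finite l] [Fintype m] [Finite n]
    {A : E → Matrix l m 𝕜} {B : E → Matrix m n 𝕜}
    (hA : DifferentiableAt 𝕜 A x) (hB : DifferentiableAt 𝕜 B x) :
    DifferentiableAt 𝕜 (fun y => A y * B y) x := by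
  rw [differentiableAt_matrix] at hA hB ⊢
  simp only [mul_apply]
  exact fun i j => DifferentiableAt.fun_sum fun k _ => (hA i k).mul (hB k j)

variable [DecidableEq m]

theorem differentiableAt_matrix_diagonal [Finite m] {d : m → E → 𝕜}
    (hd : ∀ i, DifferentiableAt 𝕜 (d i) x) :
    DifferentiableAt 𝕜 (fun y => diagonal fun i => d i y) x := by
  refine differentiableAt_matrix.2 fun i j => ?_
  obtain rfl | hij := eq_or_ne i j
  · simpa only [diagonal_apply_eq] using hd i
  · simpa only [diagonal_apply_ne _ hij] using differentiableAt_const 0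

theorem differentiableAt_matrix_updateRow_const [Finite m] [Finite n] {A : E → Matrix m n 𝕜}
    (hA : DifferentiableAt 𝕜 A x) (i : m) (v : n → 𝕜) :
    DifferentiableAt 𝕜 (fun y => (A y).updateRow i v) x := by
  refine differentiableAt_matrix.2 fun k j => ?_
  obtain rfl | hki := eq_or_ne k i
  · simpa only [updateRow_self] using differentiableAt_const (v j)
  · simpa only [updateRow_ne hki] using differentiableAt_matrix.1 hA k j

variable [Fintype m] {A : E → Matrix m m 𝕜}

theorem differentiableAt_matrix_det (hA : DifferentiableAt 𝕜 A x) :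
    DifferentiableAt 𝕜 (fun y => (A y).det) x :=
  ((detRowContinuousMultilinear 𝕜 m).hasFDerivAt (x := A x)).differentiableAt.comp x hA

theorem differentiableAt_matrix_inv (hA : DifferentiableAt 𝕜 A x) (hAx : IsUnit (A x)) :
    DifferentiableAt 𝕜 (fun y => (A y)⁻¹) x := by
  have hdet : (A x).det ≠ 0 := ((isUnit_iff_isUnit_det _).1 hAx).ne_zero
  refine differentiableAt_matrix.2 fun i j => ?_
  simp only [inv_def, Matrix.smul_apply, Ring.inverse_eq_inv', smul_eq_mul, adjugate_apply]
  exact ((differentiableAt_matrix_det hA).inv hdet).mul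
    (differentiableAt_matrix_det (differentiableAt_matrix_updateRow_const hA j _))

end Differentiable

section Deriv

variable {𝕜 m n : Type*} [NontriviallyNormedField 𝕜] {t : 𝕜}

theorem hasDerivAt_matrix [Finite m] [Finite n] {A : 𝕜 → Matrix m n 𝕜} {A' : Matrix m n 𝕜} :
    HasDerivAt A A' t ↔ ∀ i j, HasDerivAt (fun s => A s i j) (A' i j) t :=
  have := Fintype.ofFinite m
  have := Fintype.ofFinite n
  hasDerivAt_pi.trans <| forall_congr' fun _ => hasDerivAt_pi

theorem hasDerivAt_matrix_of_deriv [Finite m] [Finite n] {A : 𝕜 → Matrix m n 𝕜}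
    (hA : DifferentiableAt 𝕜 A t) :
    HasDerivAt A (of fun i j => deriv (fun s => A s i j) t) t :=
  hasDerivAt_matrix.2 fun i j => (differentiableAt_matrix.1 hA i j).hasDerivAt

variable [Fintype m] [DecidableEq m]

theorem hasDerivAt_matrix_det {A : 𝕜 → Matrix m m 𝕜} {A' : Matrix m m 𝕜}
    (hA : HasDerivAt A A' t) :
    HasDerivAt (fun s => (A s).det) (trace (A' * adjugate (A t))) t := by
  rw [trace_mul_adjugate_eq_sum_det_updateRow]
  let det := detRowContinuousMultilinear 𝕜 m
  exact ((det.hasFDerivAt (x := A t)).comp_hasDerivAt t hA).congr_deriv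
    (det.linearDeriv_apply (A t) A')

theorem hasDerivAt_matrix_det_of_isUnit {A : 𝕜 → Matrix m m 𝕜} {A' : Matrix m m 𝕜}
    (hA : HasDerivAt A A' t) (hAt : IsUnit (A t)) :
    HasDerivAt (fun s => (A s).det) ((A t).det * trace (A' * (A t)⁻¹)) t := by
  have hdet : (A t).det ≠ 0 := ((isUnit_iff_isUnit_det _).1 hAt).ne_zero
  have hadj : adjugate (A t) = (A t).det • (A t)⁻¹ := by
    rw [inv_def, Ring.inverse_eq_inv', smul_inv_smul₀ hdet]
  simpa only [hadj, Matrix.mul_smul, trace_smul, smul_eq_mul] using hasDerivAt_matrix_det hA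

theorem trace_mul_inv_eq_of_det_eventuallyEq {A B : 𝕜 → Matrix m m 𝕜} {A' B' : Matrix m m 𝕜}
    (hA : HasDerivAt A A' t) (hB : HasDerivAt B B' t) (hBt : IsUnit (B t))
    (hdet : (fun s => (A s).det) =ᶠ[𝓝 t] fun s => (B s).det) :
    trace (A' * (A t)⁻¹) = trace (B' * (B t)⁻¹) := by
  have hdet_t : (A t).det = (B t).det := hdet.self_of_nhds
  have hBdet : IsUnit (B t).det := (isUnit_iff_isUnit_det _).1 hBt
  have hAt : IsUnit (A t) := (isUnit_iff_isUnit_det _).2 (hdet_t ▸ hBdet)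
  have hderiv : (A t).det * trace (A' * (A t)⁻¹) = (B t).det * trace (B' * (B t)⁻¹) :=
    (hasDerivAt_matrix_det_of_isUnit hA hAt).unique
      ((hasDerivAt_matrix_det_of_isUnit hB hBt).congr_of_eventuallyEq hdet)
  exact mul_left_cancel₀ hBdet.ne_zero (hdet_t ▸ hderiv)

theorem trace_deriv_conj_diagonal_general {Q D M : 𝕜 → Matrix m m 𝕜}
    (hQ : DifferentiableAt 𝕜 Q t) (hQt : IsUnit (Q t))
    (hD : DifferentiableAt 𝕜 D t) (hDt : IsUnit (D t))
    (hM : ∀ᶠ s in 𝓝 t, M s = (Q s)⁻¹ * D s * Q s) :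
    trace ((of fun i j => deriv (fun s => M s i j) t) * (M t)⁻¹)
      = trace ((of fun i j => deriv (fun s => D s i j) t) * (D t)⁻¹) := by
  have hMdiff : DifferentiableAt 𝕜 M t :=
    (differentiableAt_matrix_mul (differentiableAt_matrix_mul
      (differentiableAt_matrix_inv hQ hQt) hD) hQ).congr_of_eventuallyEq hM
  have hdet : (fun s => (M s).det) =ᶠ[𝓝 t] fun s => (D s).det := by
    filter_upwards [hM, eventually_isUnit_matrix hQ.continuousAt hQt] with s hMs hQs
    rw [hMs, det_conj' hQs]
  exact trace_mul_inv_eq_of_det_eventuallyEq (hasDerivAt_matrix_of_deriv hMdiff)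
    (hasDerivAt_matrix_of_deriv hD) hDt hdet

end Deriv

/-- For a differentiable family of invertible matrices `Q(t)`, a differentiable family of
invertible diagonal matrices `D(t)` and `M(t) = Q(t)⁻¹ D(t) Q(t)`,
`tr(M'(t) M(t)⁻¹) = tr(D'(t) D(t)⁻¹)`. -/
theorem trace_deriv_conj_diagonal
    (n : ℕ) (Q : ℝ → Matrix (Fin n) (Fin n) ℝ)
    (hQdiff : ∀ i j, Differentiable ℝ fun t => Q t i j)
    (hQinv : ∀ t, IsUnit (Q t))
    (d : Fin n → ℝ → ℝ)
    (hddiff : ∀ i, Differentiable ℝ (d i))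
    (hdinv : ∀ (t : ℝ) (i : Fin n), d i t ≠ 0)
    (D : ℝ → Matrix (Fin n) (Fin n) ℝ)
    (hD : ∀ t, D t = Matrix.diagonal fun i => d i t)
    (M : ℝ → Matrix (Fin n) (Fin n) ℝ)
    (hM : ∀ t, M t = (Q t)⁻¹ * D t * Q t)
    (t : ℝ) :
    Matrix.trace ((Matrix.of fun i j => deriv (fun s => M s i j) t) * (M t)⁻¹)
      = Matrix.trace ((Matrix.of fun i j => deriv (fun s => D s i j) t) * (D t)⁻¹) := by
  obtain rfl : D = fun s => diagonal fun i => d i s := funext hD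
  have hDt : IsUnit (diagonal fun i => d i t) :=
    isUnit_diagonal.2 (Pi.isUnit_iff.2 fun i => (hdinv t i).isUnit)
  exact trace_deriv_conj_diagonal_general (differentiableAt_matrix.2 fun i j => hQdiff i j t)
    (hQinv t) (differentiableAt_matrix_diagonal fun i => hddiff i t) hDt (.of_forall hM)
end

section
/- A finite connected simple graph G = (V,E) with E ≠ ∅ is strongly symmetric if and only if for every m ∈ ℕ, the number p_m(i,j) of walks of length m between vertices i and j depends only on the graph distance L(i,j): that is, for all vertices i, j, v, w with L(i,j) = L(v,w) and all m ∈ ℕ, the number of walks of length m from i to j equals the number of walks of length m from v to w. -/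
/-- `alphaNum G s i j` is the number of neighbors `k` of `i` with `dist k j = s`. -/
noncomputable def alphaNum {V : Type*} (G : SimpleGraph V) (s : ℕ) (i j : V) : ℕ :=
  Set.ncard {k : V | G.Adj i k ∧ G.dist k j = s}

/-- A graph is strongly symmetric if `alphaNum G s i j` depends only on `s` and `dist i j`. -/
def StronglySymmetric {V : Type*} (G : SimpleGraph V) : Prop :=
  ∀ (s : ℕ) (i j v w : V), G.dist i j = G.dist v w → alphaNum G s i j = alphaNum G s v w

/-!
Splitting off the first edge of a walk gives `p_{m+1}(i,j) = ∑_{k ~ i} p_m(k,j)`. If `p_m` depends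
only on the distance, say `p_m(k,j) = f_m(L(k,j))`, then grouping the neighbors `k` of `i` by their
distance to `j` turns this into `p_{m+1}(i,j) = ∑_{s ≤ m} α_s(i,j) f_m(s)`; the sum stops at `m`
because no walk of length `m` joins vertices at distance greater than `m`. If the `α_s` depend only
on the distance, then so do all `p_m`, by induction on `m`. Conversely the system is triangular, and
its diagonal coefficient `f_m(m)` is positive if `m` occurs as a distance, while `α_m = 0` if it
does not; so it can be solved successively for `α_0`, `α_1`, ….
-/

open Finset

section DependsOnDist

variable {V α : Type*} {G : SimpleGraph V}

/-- The function `F` of two vertices factors through the graph distance. Strong symmetry is the case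
where `F` is each of the `alphaNum G s`. -/
def DependsOnDist (G : SimpleGraph V) (F : V → V → α) : Prop :=
  ∀ i j v w : V, G.dist i j = G.dist v w → F i j = F v w

lemma DependsOnDist.exists_eq_dist [Nonempty α] {F : V → V → α} (hF : DependsOnDist G F) :
    ∃ f : ℕ → α, ∀ i j, F i j = f (G.dist i j) := by
  have hfactors : (Function.uncurry F).FactorsThrough (Function.uncurry G.dist) :=
    fun _ _ h => hF _ _ _ _ h
  obtain ⟨f, hf⟩ := (Function.factorsThrough_iff _).1 hfactors
  exact ⟨f, fun i j => congrFun hf (i, j)⟩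

end DependsOnDist

section AlphaNum

variable {V : Type*} (G : SimpleGraph V)

lemma alphaNum_eq_card_filter (s : ℕ) (i j : V) [Fintype (G.neighborSet i)] :
    alphaNum G s i j = #{k ∈ G.neighborFinset i | G.dist k j = s} := by
  rw [alphaNum, ← Set.ncard_coe_finset]
  congr 1
  ext k
  simp

lemma sum_neighborFinset_dist_lt {M : Type*} [AddCommMonoid M] (f : ℕ → M) (n : ℕ) (i j : V)
    [Fintype (G.neighborSet i)] :
    ∑ k ∈ G.neighborFinset i with G.dist k j < n, f (G.dist k j) =
      ∑ s ∈ range n, alphaNum G s i j • f s := by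
  rw [← sum_fiberwise_of_maps_to' (t := range n) (by simp)]
  refine sum_congr rfl fun s hs => ?_
  rw [sum_const, alphaNum_eq_card_filter, filter_filter]
  congr 2
  exact filter_congr fun k _ => and_iff_right_of_imp fun hk => hk ▸ mem_range.1 hs

end AlphaNum

section WalkCount

variable {V : Type*} (G : SimpleGraph V)

/-- The number `p_m(i,j)` of walks of length `m` from `i` to `j`, with the junk value `0` when there
are infinitely many, which can only happen if `G` is not locally finite. -/
noncomputable def walkCount (m : ℕ) (i j : V) : ℕ :=
  Nat.card {p : G.Walk i j // p.length = m}

lemma walkCount_zero [DecidableEq V] (i j : V) : walkCount G 0 i j = if i = j then 1 else 0 := by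
  change Set.ncard {p : G.Walk i j | p.length = 0} = _
  split_ifs with h
  · subst h
    rw [SimpleGraph.Walk.setOfPred_length_eq_zero, Set.ncard_singleton]
  · rw [SimpleGraph.Walk.setOfPred_length_eq_zero_of_ne G h, Set.ncard_empty]

lemma walkCount_eq_zero_of_lt_dist {m : ℕ} {i j : V} (h : m < G.dist i j) :
    walkCount G m i j = 0 := by
  have : IsEmpty {p : G.Walk i j // p.length = m} :=
    ⟨fun ⟨p, hp⟩ => (hp ▸ SimpleGraph.dist_le p).not_gt h⟩
  exact Nat.card_of_isEmpty

/-- Splitting off the first edge of a walk. -/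
def walkLengthSuccEquiv (m : ℕ) (i j : V) :
    {p : G.Walk i j // p.length = m + 1} ≃
      Σ k : G.neighborSet i, {p : G.Walk k j // p.length = m} where
  toFun
    | ⟨.cons h p, hp⟩ => ⟨⟨_, h⟩, p, Nat.succ.inj hp⟩
  invFun q := ⟨.cons q.1.2 q.2.1, congrArg Nat.succ q.2.2⟩
  left_inv
    | ⟨.cons _ _, _⟩ => rfl
  right_inv _ := rfl

variable [G.LocallyFinite]

instance finite_walk_length_eq (m : ℕ) (i j : V) : Finite {p : G.Walk i j // p.length = m} := by
  classical infer_instance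

lemma walkCount_dist_pos {i j : V} (h : G.Reachable i j) : 0 < walkCount G (G.dist i j) i j := by
  obtain ⟨p, hp⟩ := h.exists_walk_length_eq_dist
  have : Nonempty {p : G.Walk i j // p.length = G.dist i j} := ⟨⟨p, hp⟩⟩
  exact Nat.card_pos

lemma walkCount_succ (m : ℕ) (i j : V) :
    walkCount G (m + 1) i j = ∑ k ∈ G.neighborFinset i, walkCount G m k j := by
  rw [walkCount, Nat.card_congr (walkLengthSuccEquiv G m i j), Nat.card_sigma]
  exact (sum_subtype _ (G.mem_neighborFinset i) (walkCount G m · j)).symm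

lemma walkCount_succ_eq_sum_alphaNum {m : ℕ} {f : ℕ → ℕ}
    (hf : ∀ i j, walkCount G m i j = f (G.dist i j)) (i j : V) :
    walkCount G (m + 1) i j = ∑ s ∈ range (m + 1), alphaNum G s i j * f s := by
  have hsupp (k : V) (hk : walkCount G m k j ≠ 0) : G.dist k j < m + 1 := by
    contrapose! hk
    exact walkCount_eq_zero_of_lt_dist G hk
  calc walkCount G (m + 1) i j
      = ∑ k ∈ G.neighborFinset i, walkCount G m k j := walkCount_succ G m i j
    _ = ∑ k ∈ G.neighborFinset i with G.dist k j < m + 1, walkCount G m k j :=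
        (sum_filter_of_ne fun k _ => hsupp k).symm
    _ = ∑ k ∈ G.neighborFinset i with G.dist k j < m + 1, f (G.dist k j) :=
        sum_congr rfl fun k _ => hf k j
    _ = ∑ s ∈ range (m + 1), alphaNum G s i j * f s := sum_neighborFinset_dist_lt G f (m + 1) i j

end WalkCount

section Equivalence

variable {V : Type*} {G : SimpleGraph V}

lemma dependsOnDist_walkCount_zero_iff : DependsOnDist G (walkCount G 0) ↔ G.Preconnected := by
  classical
  constructor
  · intro h u v
    by_contra huv
    -- Unreachable vertices get the junk distance `0`, as if they were equal.
    have hdist : G.dist u v = G.dist u u := by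
      rw [SimpleGraph.dist_eq_zero_of_not_reachable huv, SimpleGraph.dist_self]
    have heq : u = v := by simpa [walkCount_zero] using h u v u u hdist
    exact huv (heq ▸ SimpleGraph.Reachable.refl u)
  · intro hconn i j v w h
    have heq : i = j ↔ v = w := by
      rw [← (hconn i j).dist_eq_zero_iff, h, (hconn v w).dist_eq_zero_iff]
    simp only [walkCount_zero, heq]

variable [G.LocallyFinite]

lemma StronglySymmetric.dependsOnDist_walkCount (hG : StronglySymmetric G)
    (hconn : G.Preconnected) (m : ℕ) : DependsOnDist G (walkCount G m) := by
  induction m with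
  | zero => exact dependsOnDist_walkCount_zero_iff.2 hconn
  | succ m ih =>
    obtain ⟨f, hf⟩ := ih.exists_eq_dist
    intro i j v w h
    simp only [walkCount_succ_eq_sum_alphaNum G hf, hG _ i j v w h]

lemma stronglySymmetric_of_dependsOnDist_walkCount
    (hwalk : ∀ m, DependsOnDist G (walkCount G m)) : StronglySymmetric G := by
  have hconn : G.Preconnected := dependsOnDist_walkCount_zero_iff.1 (hwalk 0)
  intro s
  induction s using Nat.strong_induction_on with
  | _ s ih =>
    obtain ⟨f, hf⟩ := (hwalk s).exists_eq_dist
    intro i j v w h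
    have hsum := hwalk (s + 1) i j v w h
    have hlower : ∑ t ∈ range s, alphaNum G t i j * f t = ∑ t ∈ range s, alphaNum G t v w * f t :=
      sum_congr rfl fun t ht => by rw [ih t (mem_range.1 ht) i j v w h]
    rw [walkCount_succ_eq_sum_alphaNum G hf, walkCount_succ_eq_sum_alphaNum G hf, sum_range_succ,
      sum_range_succ, hlower, Nat.add_left_cancel_iff] at hsum
    by_cases hs : ∃ x y, G.dist x y = s
    · obtain ⟨x, y, rfl⟩ := hs
      have hpos : 0 < f (G.dist x y) := hf x y ▸ walkCount_dist_pos G (hconn x y)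
      exact Nat.eq_of_mul_eq_mul_right hpos hsum
    · have hzero (a b : V) : alphaNum G s a b = 0 := by
        rw [alphaNum_eq_card_filter, card_eq_zero, filter_eq_empty_iff]
        exact fun k _ hk => hs ⟨k, b, hk⟩
      rw [hzero, hzero]

theorem stronglySymmetric_iff_walkCount_general :
    G.Preconnected ∧ StronglySymmetric G ↔
      ∀ (m : ℕ) (i j v w : V), G.dist i j = G.dist v w →
        Nat.card {p : G.Walk i j // p.length = m} =
          Nat.card {p : G.Walk v w // p.length = m} :=
  ⟨fun ⟨hconn, hG⟩ => hG.dependsOnDist_walkCount hconn, fun hwalk =>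
    ⟨dependsOnDist_walkCount_zero_iff.1 (hwalk 0),
      stronglySymmetric_of_dependsOnDist_walkCount hwalk⟩⟩

end Equivalence

/-- A finite connected graph with at least one edge is strongly symmetric if and only if for every
`m` the number of walks of length `m` between two vertices depends only on their distance. -/
theorem stronglySymmetric_iff_walkCount
    {V : Type*} [Fintype V] (G : SimpleGraph V)
    (hconn : G.Connected) (hE : ∃ a b : V, G.Adj a b) :
    StronglySymmetric G ↔
      ∀ (m : ℕ) (i j v w : V), G.dist i j = G.dist v w →
        Nat.card {p : G.Walk i j // p.length = m} =
          Nat.card {p : G.Walk v w // p.length = m} := by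
  classical
  exact (and_iff_right hconn.preconnected).symm.trans
    stronglySymmetric_iff_walkCount_general
end

section
/- Let G be a finite connected strongly symmetric simple graph with E ≠ ∅ and adjacency matrix A. Then for every m ∈ ℕ, the entries of A^m depend only on the graph distance: for all vertices i, j, v, w with L(i,j) = L(v,w), one has (A^m)_{ij} = (A^m)_{vw}. -/
open Matrix

/-! The entries of `A ^ m` count walks. The number of walks of length `m + 1` from `i` to `j` is the
sum, over the neighbors `k` of `i`, of the number of walks of length `m` from `k` to `j`. By
induction each summand is a function of `G.dist k j`, and strong symmetry says that the multiset of
these distances is determined by `G.dist i j`. -/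

section

variable {V : Type*} {G : SimpleGraph V}

theorem alphaNum_eq_count_map_dist (s : ℕ) (i j : V) [Fintype (G.neighborSet i)] :
    alphaNum G s i j = ((G.neighborFinset i).val.map (G.dist · j)).count s := by
  have hset : {k | G.Adj i k ∧ G.dist k j = s} =
      ↑({k ∈ G.neighborFinset i | s = G.dist k j} : Finset V) := by
    ext k
    simp [eq_comm]
  rw [alphaNum, hset, Set.ncard_coe_finset, Multiset.count_map, Finset.card_def,
    Finset.filter_val]

theorem card_walk_length_zero [DecidableEq V] [G.LocallyFinite] (u v : V) :
    Fintype.card {p : G.Walk u v | p.length = 0} = if u = v then 1 else 0 := by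
  rw [SimpleGraph.card_set_walk_length_eq]
  obtain rfl | huv := eq_or_ne u v <;> simp [SimpleGraph.finsetWalkLength, *]

/-- Splitting off the first step of a walk: the remaining walk has a starting point depending on
that step, hence the sigma type. -/
def walkLengthAddOneEquivSigma (n : ℕ) (u v : V) :
    {p : G.Walk u v | p.length = n + 1} ≃
      Σ w : G.neighborSet u, {p : G.Walk w v | p.length = n} where
  toFun | ⟨.cons h p, hp⟩ => ⟨⟨_, h⟩, p, Nat.succ.inj hp⟩
  invFun | ⟨w, p, hp⟩ => ⟨.cons w.2 p, congrArg Nat.succ hp⟩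
  left_inv | ⟨.cons _ _, _⟩ => rfl
  right_inv _ := rfl

theorem card_walk_length_add_one [DecidableEq V] [G.LocallyFinite] (n : ℕ) (u v : V) :
    Fintype.card {p : G.Walk u v | p.length = n + 1} =
      ∑ w ∈ G.neighborFinset u, Fintype.card {p : G.Walk w v | p.length = n} := by
  rw [Fintype.card_congr (walkLengthAddOneEquivSigma n u v), Fintype.card_sigma]
  exact Finset.sum_set_coe (f := fun w => Fintype.card {p : G.Walk w v | p.length = n}) _

namespace StronglySymmetric

theorem map_dist_neighborFinset_eq_of_dist_eq (hsym : StronglySymmetric G) {i j v w : V}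
    [Fintype (G.neighborSet i)] [Fintype (G.neighborSet v)] (h : G.dist i j = G.dist v w) :
    (G.neighborFinset i).val.map (G.dist · j) = (G.neighborFinset v).val.map (G.dist · w) := by
  ext s
  rw [← alphaNum_eq_count_map_dist, ← alphaNum_eq_count_map_dist, hsym s i j v w h]

theorem sum_neighborFinset_eq_of_dist_eq {M : Type*} [AddCommMonoid M] (hsym : StronglySymmetric G)
    {g : V → V → M} (hg : ∀ i j v w, G.dist i j = G.dist v w → g i j = g v w) {i j v w : V}
    [Fintype (G.neighborSet i)] [Fintype (G.neighborSet v)] (h : G.dist i j = G.dist v w) :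
    ∑ k ∈ G.neighborFinset i, g k j = ∑ k ∈ G.neighborFinset v, g k w := by
  obtain ⟨f, hf⟩ : ∃ f : ℕ → M, ∀ i j, g i j = f (G.dist i j) := by
    have hfactors : g.uncurry.FactorsThrough G.dist.uncurry := fun _ _ => hg _ _ _ _
    obtain ⟨f, hf⟩ := (Function.factorsThrough_iff _).mp hfactors
    exact ⟨f, fun i j => congrFun hf (i, j)⟩
  have hsum := congrArg (fun d => (d.map f).sum) (hsym.map_dist_neighborFinset_eq_of_dist_eq h)
  simpa only [hf, Multiset.map_map, Function.comp_def, Finset.sum_eq_multiset_sum] using hsum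

end StronglySymmetric

/-- For a graph that is only locally finite, the number of walks of length `m` from `i` to `j`
takes the place of the entry of `A ^ m` at `(i, j)`. -/
theorem adjMatrix_pow_dep_only_on_dist_general [DecidableEq V] [G.LocallyFinite]
    (hconn : G.Preconnected) (hsym : StronglySymmetric G) (m : ℕ) :
    ∀ i j v w : V, G.dist i j = G.dist v w →
      Fintype.card {p : G.Walk i j | p.length = m} =
        Fintype.card {p : G.Walk v w | p.length = m} := by
  induction m with
  | zero =>
    intro i j v w h
    have heq : i = j ↔ v = w := by
      rw [← (hconn i j).dist_eq_zero_iff, h, (hconn v w).dist_eq_zero_iff]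
    simp only [card_walk_length_zero, heq]
  | succ m ih =>
    intro i j v w h
    rw [card_walk_length_add_one, card_walk_length_add_one]
    exact hsym.sum_neighborFinset_eq_of_dist_eq ih h

end

/-- For a finite connected strongly symmetric graph with adjacency matrix `A`, the entries of
`A ^ m` depend only on the graph distance of the indexing vertices. -/
theorem adjMatrix_pow_dep_only_on_dist
    {V : Type*} [Fintype V] [DecidableEq V] (G : SimpleGraph V) [DecidableRel G.Adj]
    (hconn : G.Connected) (hE : ∃ a b : V, G.Adj a b)
    (hsym : StronglySymmetric G) :
    ∀ (m : ℕ) (i j v w : V), G.dist i j = G.dist v w →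
      (G.adjMatrix ℝ ^ m) i j = (G.adjMatrix ℝ ^ m) v w := by
  intro m i j v w h
  simp only [SimpleGraph.adjMatrix_pow_apply_eq_card_walk,
    adjMatrix_pow_dep_only_on_dist_general hconn.preconnected hsym m i j v w h]
end

section
/- Let G be a finite connected strongly symmetric simple graph on n vertices with E ≠ ∅ and adjacency matrix A, and let y ∈ ℂ be fixed. Then for all but finitely many x ∈ ℂ, the matrix B(x,y) := x·I + y·A is invertible and the entries of B(x,y)⁻¹ = (c_ij) depend only on the graph distance L(i,j): if L(i,j) = L(v,w) then c_ij = c_vw. In particular there are values x₀(x,y) and x₁(x,y) such that c_ii = x₀(x,y) for every vertex i and c_ij = x₁(x,y) for every edge (i,j) ∈ E. -/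
open Matrix

/-!
Let `A` be the adjacency matrix. Since `(A M) i j` sums `M k j` over the neighbours `k` of `i`, and
strong symmetry says that the distances from these `k` to `j` form a multiset determined by
`dist i j`, left multiplication by `A` preserves the module of matrices whose entries depend only
on the distance. That module contains `1`, hence every polynomial in `A`. By Cayley–Hamilton the
inverse of an invertible polynomial in `A` is again a polynomial in `A`.
-/

section Inverse

variable {n R : Type*} [Fintype n] [DecidableEq n] [CommRing R]

theorem exists_mem_adjoin_singleton_mul_eq_det_smul_one (B : Matrix n n R) :
    ∃ P ∈ Algebra.adjoin R {B}, B * P = B.det • 1 := by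
  set q := Polynomial.aeval B B.charpoly.divX
  have cayley_hamilton : B * q + B.charpoly.coeff 0 • 1 = 0 := by
    have h := congrArg (Polynomial.aeval B) (Polynomial.X_mul_divX_add B.charpoly)
    rwa [map_add, map_mul, Polynomial.aeval_X, Polynomial.aeval_C, aeval_self_charpoly,
      Algebra.algebraMap_eq_smul_one] at h
  refine ⟨(-1) ^ Fintype.card n • -q,
    Subalgebra.smul_mem _ (neg_mem (Polynomial.aeval_mem_adjoin_singleton R B)) _, ?_⟩
  rw [mul_smul_comm, mul_neg, neg_eq_of_add_eq_zero_right cayley_hamilton,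
    det_eq_sign_charpoly_coeff, mul_smul]

theorem matrix_inv_mem_adjoin_singleton (B : Matrix n n R) : B⁻¹ ∈ Algebra.adjoin R {B} := by
  by_cases hB : IsUnit B.det
  · obtain ⟨P, hP, hBP⟩ := exists_mem_adjoin_singleton_mul_eq_det_smul_one B
    have inv_eq : B⁻¹ = Ring.inverse B.det • P := inv_eq_right_inv <| by
      rw [mul_smul_comm, hBP, smul_smul, Ring.inverse_mul_cancel _ hB, one_smul]
    rw [inv_eq]
    exact Subalgebra.smul_mem _ hP _
  · rw [nonsing_inv_apply_not_isUnit B hB]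
    exact zero_mem _

theorem finite_setOf_not_isUnit_smul_one_add {K : Type*} [Field K] (M : Matrix n n K) :
    {x : K | ¬IsUnit (x • (1 : Matrix n n K) + M)}.Finite := by
  convert (-M).finite_spectrum using 1
  ext x
  rw [Set.mem_ofPred_eq, spectrum.mem_iff, Algebra.algebraMap_eq_smul_one, sub_neg_eq_add]

end Inverse

section DistSubmodule

variable {V : Type*} {G : SimpleGraph V}

theorem StronglySymmetric.map_dist_neighborFinset [G.LocallyFinite] (hsym : StronglySymmetric G)
    {i j v w : V} (h : G.dist i j = G.dist v w) :
    (G.neighborFinset i).val.map (G.dist · j) = (G.neighborFinset v).val.map (G.dist · w) := by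
  have count_eq_alphaNum (s : ℕ) (i j : V) :
      ((G.neighborFinset i).val.map (G.dist · j)).count s = alphaNum G s i j := by
    rw [Multiset.count_map, ← Finset.filter_val, Finset.card_val, ← Set.ncard_coe_finset, alphaNum]
    congr 1
    ext k
    simp [eq_comm]
  ext s
  rw [count_eq_alphaNum, count_eq_alphaNum, hsym s i j v w h]

/-- The `R`-module of matrices, indexed by the vertices of `G`, whose entries depend only on the
graph distance between their indices. For a connected distance-regular graph it is the
Bose–Mesner algebra. -/
def distSubmodule (R : Type*) [Semiring R] (G : SimpleGraph V) : Submodule R (Matrix V V R) where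
  carrier := {M | ∀ i j v w, G.dist i j = G.dist v w → M i j = M v w}
  add_mem' hM hN i j v w h := congrArg₂ (· + ·) (hM i j v w h) (hN i j v w h)
  zero_mem' _ _ _ _ _ := rfl
  smul_mem' c _ hM i j v w h := congrArg (c • ·) (hM i j v w h)

section Semiring

variable {R : Type*} [Semiring R]

theorem mem_distSubmodule_iff_exists {M : Matrix V V R} :
    M ∈ distSubmodule R G ↔ ∃ f : ℕ → R, ∀ i j, M i j = f (G.dist i j) := by
  constructor
  · intro hM
    have hfactors : (Function.uncurry M).FactorsThrough (Function.uncurry G.dist) :=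
      fun p q h => hM p.1 p.2 q.1 q.2 h
    obtain ⟨f, hf⟩ := (Function.factorsThrough_iff _).mp hfactors
    exact ⟨f, fun i j => congrFun hf (i, j)⟩
  · rintro ⟨f, hf⟩ i j v w h
    rw [hf, hf, h]

theorem one_mem_distSubmodule [DecidableEq V] (hconn : G.Preconnected) :
    (1 : Matrix V V R) ∈ distSubmodule R G :=
  mem_distSubmodule_iff_exists.mpr
    ⟨fun s => if s = 0 then 1 else 0, fun i j => by
      simp only [one_apply, (hconn i j).dist_eq_zero_iff]⟩

theorem StronglySymmetric.adjMatrix_mul_mem_distSubmodule [Fintype V] [DecidableRel G.Adj]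
    (hsym : StronglySymmetric G) {M : Matrix V V R} (hM : M ∈ distSubmodule R G) :
    G.adjMatrix R * M ∈ distSubmodule R G := by
  obtain ⟨f, hf⟩ := mem_distSubmodule_iff_exists.mp hM
  have entry_eq (i j : V) : (G.adjMatrix R * M) i j =
      (((G.neighborFinset i).val.map (G.dist · j)).map f).sum := by
    simp only [SimpleGraph.adjMatrix_mul_apply, hf, Multiset.map_map, Function.comp_def,
      Finset.sum_map_val]
  intro i j v w h
  rw [entry_eq, entry_eq, hsym.map_dist_neighborFinset h]

end Semiring

variable [Fintype V] [DecidableEq V] [DecidableRel G.Adj]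

theorem StronglySymmetric.mem_distSubmodule_of_mem_adjoin {R : Type*} [CommSemiring R]
    (hsym : StronglySymmetric G) (hconn : G.Preconnected) {P : Matrix V V R}
    (hP : P ∈ Algebra.adjoin R {G.adjMatrix R}) : P ∈ distSubmodule R G := by
  have mul_mem : ∀ M ∈ distSubmodule R G, P * M ∈ distSubmodule R G := by
    induction hP using Algebra.adjoin_induction with
    | mem X hX =>
      rw [Set.mem_singleton_iff.mp hX]
      exact fun M => hsym.adjMatrix_mul_mem_distSubmodule
    | algebraMap r =>
      intro M hM
      rw [← Algebra.smul_def]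
      exact Submodule.smul_mem _ r hM
    | add X Y _ _ hX hY =>
      intro M hM
      rw [add_mul]
      exact add_mem (hX M hM) (hY M hM)
    | mul X Y _ _ hX hY =>
      intro M hM
      rw [mul_assoc]
      exact hX _ (hY M hM)
  simpa only [mul_one] using mul_mem 1 (one_mem_distSubmodule hconn)

theorem StronglySymmetric.inv_mem_distSubmodule_of_mem_adjoin {R : Type*} [CommRing R]
    (hsym : StronglySymmetric G) (hconn : G.Preconnected) {P : Matrix V V R}
    (hP : P ∈ Algebra.adjoin R {G.adjMatrix R}) : P⁻¹ ∈ distSubmodule R G :=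
  hsym.mem_distSubmodule_of_mem_adjoin hconn <|
    Algebra.adjoin_le (Set.singleton_subset_iff.mpr hP) (matrix_inv_mem_adjoin_singleton P)

end DistSubmodule

theorem inv_of_xI_add_yAdj_dep_only_on_dist_general {V K : Type*} [Fintype V] [DecidableEq V]
    [Field K] (G : SimpleGraph V) [DecidableRel G.Adj] (hconn : G.Preconnected)
    (hsym : StronglySymmetric G) (y : K) :
    ∃ S : Finset K, ∀ x ∉ S,
      IsUnit (x • (1 : Matrix V V K) + y • G.adjMatrix K) ∧
      ∃ c : ℕ → K, ∀ i j,
        (x • (1 : Matrix V V K) + y • G.adjMatrix K)⁻¹ i j = c (G.dist i j) := by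
  have hfinite := finite_setOf_not_isUnit_smul_one_add (y • G.adjMatrix K)
  refine ⟨hfinite.toFinset, fun x hx => ⟨?_, ?_⟩⟩
  · simpa only [Set.Finite.mem_toFinset, Set.mem_ofPred_eq, not_not] using hx
  · have hadjoin : x • (1 : Matrix V V K) + y • G.adjMatrix K ∈
        Algebra.adjoin K {G.adjMatrix K} :=
      add_mem (Subalgebra.smul_mem _ (one_mem _) x)
        (Subalgebra.smul_mem _ (Algebra.self_mem_adjoin_singleton K _) y)
    exact mem_distSubmodule_iff_exists.mp (hsym.inv_mem_distSubmodule_of_mem_adjoin hconn hadjoin)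

/-- For a finite connected strongly symmetric graph on `n` vertices with adjacency matrix `A`
and fixed `y ∈ ℂ`, for all but finitely many `x ∈ ℂ` the matrix `B(x,y) = x·I + y·A` is
invertible and the entries of its inverse depend only on the graph distance; in particular the
diagonal entries of the inverse share a common value `x₀` and the entries indexed by edges share
a common value `x₁`. -/
theorem inv_of_xI_add_yAdj_dep_only_on_dist
    (n : ℕ) (G : SimpleGraph (Fin n)) [DecidableRel G.Adj]
    (hconn : G.Connected) (hE : ∃ a b : Fin n, G.Adj a b)
    (hsym : StronglySymmetric G) (y : ℂ)
    (B : ℂ → Matrix (Fin n) (Fin n) ℂ)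
    (hB : ∀ x : ℂ, B x = x • (1 : Matrix (Fin n) (Fin n) ℂ) + y • G.adjMatrix ℂ) :
    ∃ S : Finset ℂ, ∀ x : ℂ, x ∉ S →
      IsUnit (B x) ∧
      (∀ i j v w : Fin n, G.dist i j = G.dist v w → (B x)⁻¹ i j = (B x)⁻¹ v w) ∧
      (∃ x₀ x₁ : ℂ, (∀ i : Fin n, (B x)⁻¹ i i = x₀) ∧
        ∀ i j : Fin n, G.Adj i j → (B x)⁻¹ i j = x₁) := by
  obtain ⟨S, hS⟩ := inv_of_xI_add_yAdj_dep_only_on_dist_general G hconn.preconnected hsym y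
  simp only [← hB] at hS
  refine ⟨S, fun x hx => ?_⟩
  obtain ⟨hunit, c, hc⟩ := hS x hx
  refine ⟨hunit, fun i j v w h => by rw [hc, hc, h], c 0, c 1, fun i => ?_, fun i j hij => ?_⟩
  · rw [hc, SimpleGraph.dist_self]
  · rw [hc, SimpleGraph.dist_eq_one_iff_adj.mpr hij]
end

section
/- Let G be a finite connected strongly symmetric simple graph on n vertices with E ≠ ∅, adjacency matrix Adj and common vertex degree d, and let c = 2/√3. Set Δ₀ := c·(d·I − Adj). Let A be any symmetric n×n real matrix with tr(A) = 0, ∑_{i ≠ j} A_ij = 0, and A_ij = 0 whenever i ≠ j and (i,j) ∉ E. Then for all but finitely many δ > 0, the matrix Δ₀ + δ·I is invertible and tr(A · (Δ₀ + δ·I)⁻¹) = 0. -/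
open Matrix

/-!
Strong symmetry makes the entries of `Adj * X` functions of the graph distance whenever the entries
of `X` are. Starting from `X = 1`, this gives the same for every polynomial in `Adj`. On the
finite-dimensional algebra of these polynomials, multiplication by an invertible element is
bijective, so `(Δ₀ + δ • 1)⁻¹` is a polynomial in `Adj` too and has entries `f (dist i j)` for some
`f`. Only distances `0` and `1` meet the support of `A`, so the trace is `f 0` times the trace of
`A` plus `f 1` times the sum of its off-diagonal entries.
-/

section MatrixOfDist

variable {V : Type*} (G : SimpleGraph V)

/-- The matrix with entries `f (dist i j)`, linear in the profile `f : ℕ → R`. Its range is the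
space of matrices whose entries depend only on the graph distance. -/
noncomputable def matrixOfDist (R : Type*) [Semiring R] : (ℕ → R) →ₗ[R] Matrix V V R where
  toFun f := .of fun i j => f (G.dist i j)
  map_add' _ _ := rfl
  map_smul' _ _ := rfl

variable {R : Type*} {G}

@[simp]
lemma matrixOfDist_apply [Semiring R] (f : ℕ → R) (i j : V) :
    matrixOfDist G R f i j = f (G.dist i j) :=
  rfl

lemma mem_range_matrixOfDist_iff [Semiring R] {X : Matrix V V R} :
    X ∈ LinearMap.range (matrixOfDist G R) ↔
      ∀ i j v w, G.dist i j = G.dist v w → X i j = X v w := by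
  constructor
  · rintro ⟨f, rfl⟩ i j v w h
    simp only [matrixOfDist_apply, h]
  · intro h
    obtain ⟨f, hf⟩ := (Function.factorsThrough_iff (f := fun p : V × V => G.dist p.1 p.2)
      fun p : V × V => X p.1 p.2).1 fun p q hpq => h p.1 p.2 q.1 q.2 hpq
    exact ⟨f, Matrix.ext fun i j => (congrFun hf (i, j)).symm⟩

lemma matrixOfDist_single_zero_one [DecidableEq V] [Semiring R] (hconn : G.Connected) :
    matrixOfDist G R (Pi.single 0 1) = 1 := by
  ext i j
  simp [Pi.single_apply, Matrix.one_apply, hconn.dist_eq_zero_iff]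

lemma trace_mul_matrixOfDist [Fintype V] [DecidableEq V] [Semiring R] {A : Matrix V V R}
    (hA : ∀ i j, i ≠ j → ¬ G.Adj i j → A i j = 0) (f : ℕ → R) :
    trace (A * matrixOfDist G R f) =
      trace A * f 0 + (∑ i, ∑ j ∈ Finset.univ.erase i, A i j) * f 1 := by
  have entry_off_diag (i j : V) (hij : j ∈ Finset.univ.erase i) :
      A i j * f (G.dist j i) = A i j * f 1 := by
    by_cases hadj : G.Adj i j
    · rw [SimpleGraph.dist_eq_one_iff_adj.2 hadj.symm]
    · simp only [hA i j (Finset.ne_of_mem_erase hij).symm hadj, zero_mul]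
  have diag_entry (i : V) : (A * matrixOfDist G R f) i i =
      A i i * f 0 + (∑ j ∈ Finset.univ.erase i, A i j) * f 1 := by
    simp only [Matrix.mul_apply, matrixOfDist_apply]
    rw [← Finset.add_sum_erase _ _ (Finset.mem_univ i), SimpleGraph.dist_self,
      Finset.sum_congr rfl (entry_off_diag i), Finset.sum_mul]
  simp only [Matrix.trace, Matrix.diag_apply, diag_entry, Finset.sum_add_distrib, Finset.sum_mul]

end MatrixOfDist

section StronglySymmetric

variable {V R : Type*} {G : SimpleGraph V}

lemma count_map_dist_neighborFinset (s : ℕ) (i j : V) [Fintype (G.neighborSet i)] :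
    ((G.neighborFinset i).val.map (G.dist · j)).count s = alphaNum G s i j := by
  classical
  rw [Multiset.count_map, ← Finset.filter_val, Finset.card_val, alphaNum, ← Set.ncard_coe_finset]
  congr 1
  ext k
  simp [eq_comm]

lemma StronglySymmetric.sum_neighborFinset_dist [AddCommMonoid R] (hsym : StronglySymmetric G)
    {i j v w : V} [Fintype (G.neighborSet i)] [Fintype (G.neighborSet v)]
    (h : G.dist i j = G.dist v w) (f : ℕ → R) :
    ∑ k ∈ G.neighborFinset i, f (G.dist k j) = ∑ k ∈ G.neighborFinset v, f (G.dist k w) := by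
  have same_distances : (G.neighborFinset i).val.map (G.dist · j) =
      (G.neighborFinset v).val.map (G.dist · w) :=
    Multiset.ext.2 fun s => by simp only [count_map_dist_neighborFinset, hsym s i j v w h]
  simpa only [Finset.sum, Multiset.map_map, Function.comp_def] using
    congrArg (fun m => (m.map f).sum) same_distances

variable [Fintype V] [DecidableRel G.Adj]

lemma StronglySymmetric.adjMatrix_mul_mem_range_matrixOfDist [Semiring R]
    (hsym : StronglySymmetric G) {X : Matrix V V R}
    (hX : X ∈ LinearMap.range (matrixOfDist G R)) :
    G.adjMatrix R * X ∈ LinearMap.range (matrixOfDist G R) := by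
  obtain ⟨f, rfl⟩ := hX
  refine mem_range_matrixOfDist_iff.2 fun i j v w h => ?_
  simpa only [SimpleGraph.adjMatrix_mul_apply, matrixOfDist_apply] using
    hsym.sum_neighborFinset_dist h f

variable [DecidableEq V]

lemma StronglySymmetric.mul_mem_range_matrixOfDist [CommSemiring R]
    (hsym : StronglySymmetric G) {M X : Matrix V V R} (hM : M ∈ Algebra.adjoin R {G.adjMatrix R})
    (hX : X ∈ LinearMap.range (matrixOfDist G R)) :
    M * X ∈ LinearMap.range (matrixOfDist G R) := by
  induction hM using Algebra.adjoin_induction generalizing X with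
  | mem M hM =>
    obtain rfl := Set.mem_singleton_iff.1 hM
    exact hsym.adjMatrix_mul_mem_range_matrixOfDist hX
  | algebraMap r =>
    rw [← Algebra.smul_def]
    exact Submodule.smul_mem _ r hX
  | add M N _ _ ihM ihN =>
    rw [add_mul]
    exact add_mem (ihM hX) (ihN hX)
  | mul M N _ _ ihM ihN =>
    rw [mul_assoc]
    exact ihM (ihN hX)

lemma StronglySymmetric.mem_range_matrixOfDist_of_mem_adjoin [CommSemiring R]
    (hsym : StronglySymmetric G) (hconn : G.Connected) {M : Matrix V V R}
    (hM : M ∈ Algebra.adjoin R {G.adjMatrix R}) :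
    M ∈ LinearMap.range (matrixOfDist G R) := by
  simpa only [mul_one] using
    hsym.mul_mem_range_matrixOfDist hM ⟨_, matrixOfDist_single_zero_one hconn⟩

end StronglySymmetric

section Inverse

variable {R : Type*} [CommRing R] [IsArtinianRing R]

open nonZeroDivisors in
lemma units_inv_mem_subalgebra {A : Type*} [Ring A] [Algebra R A] {S : Subalgebra R A} {u : Aˣ}
    (hint : IsIntegral R (u : A)) (hu : (u : A) ∈ S) : (↑u⁻¹ : A) ∈ S := by
  have integral : IsIntegral R (⟨u, hu⟩ : S) :=
    (isIntegral_algHom_iff S.val Subtype.val_injective).1 hint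
  have regular : (⟨u, hu⟩ : S) ∈ S⁰ :=
    comap_nonZeroDivisors_le_of_injective (f := S.val) Subtype.val_injective
      u.isUnit.mem_nonZeroDivisors
  obtain ⟨b, hb⟩ := (IsArtinianRing.isUnit_of_isIntegral_of_nonZeroDivisor
    integral regular).exists_right_inv
  rw [Units.inv_eq_of_mul_eq_one_right (congrArg Subtype.val hb)]
  exact b.2

lemma matrix_inv_mem_subalgebra {ι : Type*} [Fintype ι] [DecidableEq ι]
    {S : Subalgebra R (Matrix ι ι R)} {M : Matrix ι ι R} (hM : M ∈ S) : M⁻¹ ∈ S := by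
  by_cases hunit : IsUnit M
  · obtain ⟨u, rfl⟩ := hunit
    rw [← Matrix.coe_units_inv]
    exact units_inv_mem_subalgebra (Matrix.isIntegral _) hM
  · rw [Matrix.nonsing_inv_eq_ringInverse, Ring.inverse_non_unit M hunit]
    exact zero_mem S

end Inverse

section Laplacian

variable {V : Type*} [Fintype V] [DecidableEq V] {G : SimpleGraph V} [DecidableRel G.Adj] {d : ℕ}

lemma smul_one_sub_adjMatrix_eq_lapMatrix {R : Type*} [Ring R]
    (hd : G.IsRegularOfDegree d) : (d : R) • 1 - G.adjMatrix R = G.lapMatrix R := by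
  simp only [SimpleGraph.lapMatrix, SimpleGraph.degMatrix, hd.degree_eq,
    Matrix.smul_one_eq_diagonal]

theorem trace_mul_inv_shifted_symmetric_laplacian_general
    (hconn : G.Connected) (hsym : StronglySymmetric G) (hd : ∀ i, G.degree i = d)
    {c δ : ℝ} (hc : 0 ≤ c) (hδ : 0 < δ) {A : Matrix V V ℝ} (hAtr : trace A = 0)
    (hAoff : ∑ i, ∑ j ∈ Finset.univ.erase i, A i j = 0)
    (hAsupp : ∀ i j, i ≠ j → ¬ G.Adj i j → A i j = 0) :
    IsUnit (c • ((d : ℝ) • 1 - G.adjMatrix ℝ) + δ • 1) ∧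
      trace (A * (c • ((d : ℝ) • 1 - G.adjMatrix ℝ) + δ • 1)⁻¹) = 0 := by
  constructor
  · rw [smul_one_sub_adjMatrix_eq_lapMatrix hd]
    exact (PosDef.posSemidef_add ((G.posSemidef_lapMatrix ℝ).smul hc) (PosDef.one.smul hδ)).isUnit
  · have mem_adjoin : c • ((d : ℝ) • 1 - G.adjMatrix ℝ) + δ • 1 ∈
        Algebra.adjoin ℝ {G.adjMatrix ℝ} :=
      add_mem (Subalgebra.smul_mem _ (sub_mem (Subalgebra.smul_mem _ (one_mem _) _)
        (Algebra.self_mem_adjoin_singleton ℝ _)) c) (Subalgebra.smul_mem _ (one_mem _) δ)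
    obtain ⟨f, hf⟩ :=
      hsym.mem_range_matrixOfDist_of_mem_adjoin hconn (matrix_inv_mem_subalgebra mem_adjoin)
    rw [← hf, trace_mul_matrixOfDist hAsupp, hAtr, hAoff, zero_mul, zero_mul, add_zero]

end Laplacian

/-- Let `G` be a finite connected strongly symmetric graph on `n` vertices with adjacency matrix
`Adj` and common degree `d`, and let `Δ₀ = (2/√3)·(d·I - Adj)` be the cotan-Laplacian of the
equilateral triangulation on `G`. For any symmetric trace-free matrix `A` supported on the edges
off the diagonal and whose off-diagonal entries sum to zero, for all but finitely many `δ > 0`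
the matrix `Δ₀ + δI` is invertible and `tr(A · (Δ₀ + δI)⁻¹) = 0`. -/
theorem trace_mul_inv_shifted_symmetric_laplacian
    (n : ℕ) (G : SimpleGraph (Fin n)) [DecidableRel G.Adj]
    (hconn : G.Connected) (hE : ∃ a b : Fin n, G.Adj a b)
    (hsym : StronglySymmetric G)
    (d : ℕ) (hd : ∀ i : Fin n, G.degree i = d)
    (Δ₀ : Matrix (Fin n) (Fin n) ℝ)
    (hΔ : Δ₀ = (2 / Real.sqrt 3) •
      ((d : ℝ) • (1 : Matrix (Fin n) (Fin n) ℝ) - G.adjMatrix ℝ))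
    (A : Matrix (Fin n) (Fin n) ℝ)
    (hAsymm : A.IsSymm)
    (hAtr : Matrix.trace A = 0)
    (hAoff : ∑ i : Fin n, ∑ j ∈ Finset.univ.erase i, A i j = 0)
    (hAsupp : ∀ i j : Fin n, i ≠ j → ¬ G.Adj i j → A i j = 0) :
    ∃ S : Finset ℝ, ∀ δ : ℝ, 0 < δ → δ ∉ S →
      IsUnit (Δ₀ + δ • (1 : Matrix (Fin n) (Fin n) ℝ)) ∧
        Matrix.trace (A * (Δ₀ + δ • (1 : Matrix (Fin n) (Fin n) ℝ))⁻¹) = 0 := by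
  subst hΔ
  exact ⟨∅, fun δ hδ _ => trace_mul_inv_shifted_symmetric_laplacian_general
    hconn hsym hd (by positivity) hδ hAtr hAoff hAsupp⟩
end

section
/- Let n ≥ 2 and c = 2/√3. Let L : ℝ → Matrix (Fin n) (Fin n) ℝ be a family of symmetric matrices, differentiable at ε = 0, such that: (1) every row of L(ε) sums to zero for all ε; (2) L(0)_ij = −c for all i ≠ j (so L(0)_ii = (n−1)·c); (3) L(ε)_ij < 0 for all i ≠ j and all ε in a neighborhood of 0; and (4) tr(L'(0)) = 0. Let J denote the n×n all-ones matrix. Then the function ε ↦ det(L(ε) + n⁻¹·J), which for ε near 0 equals the product of the nonzero eigenvalues of L(ε), has derivative zero at ε = 0. -/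
open Matrix

/-!
By Jacobi's formula the derivative of `det A` is `tr (adj A * A')`. If `A` is unchanged by
simultaneous permutations of its rows and columns, then so is `adj A`, which therefore has the form
`a • 1 + b • J` with `J` the all-ones matrix, as the permutations act doubly transitively. Hence the
derivative is `a * tr A'` plus `b` times the sum of the entries of `A'`. For `A = L + t • J` one has
`A' = L'`, whose entries sum to zero because the rows of `L` do. At the complete graph with equal
weights `L` has constant off-diagonal entries and constant row sums, hence the required symmetry.
-/

open Equiv Topology

section Jacobi

variable {ι R : Type*} [Fintype ι] [DecidableEq ι] [CommRing R]

theorem trace_adjugate_mul_eq_sum_det_updateCol (A B : Matrix ι ι R) :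
    (A.adjugate * B).trace = ∑ i, (A.updateCol i (B.col i)).det :=
  Finset.sum_congr rfl fun i _ =>
    calc (A.adjugate * B) i i = (A.adjugate *ᵥ B.col i) i := rfl
      _ = (A.updateCol i (B.col i)).det := by rw [← cramer_eq_adjugate_mulVec, cramer_apply]

theorem det_updateCol_eq_sum_perm (A : Matrix ι ι R) (i : ι) (b : ι → R) :
    (A.updateCol i b).det =
      ∑ σ : Perm ι, (Perm.sign σ : R) * ((∏ j ∈ Finset.univ.erase i, A (σ j) j) * b (σ i)) := by
  rw [det_apply']
  refine Finset.sum_congr rfl fun σ _ => ?_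
  have off_col : ∀ j ∈ Finset.univ.erase i, A.updateCol i b (σ j) j = A (σ j) j :=
    fun j hj => updateCol_ne (Finset.ne_of_mem_erase hj)
  rw [← Finset.prod_erase_mul _ _ (Finset.mem_univ i), Finset.prod_congr rfl off_col,
    updateCol_self]

theorem hasDerivAt_det_of_entries {𝕜 𝔸 : Type*} [NontriviallyNormedField 𝕜] [NormedCommRing 𝔸]
    [NormedAlgebra 𝕜 𝔸] {A : 𝕜 → Matrix ι ι 𝔸} {A' : Matrix ι ι 𝔸} {x : 𝕜}
    (hA : ∀ i j, HasDerivAt (fun t => A t i j) (A' i j) x) :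
    HasDerivAt (fun t => (A t).det) ((A x).adjugate * A').trace x := by
  have leibniz : HasDerivAt (fun t => ∑ σ : Perm ι, (Perm.sign σ : 𝔸) * ∏ i, A t (σ i) i)
      (∑ σ : Perm ι, (Perm.sign σ : 𝔸) *
        ∑ i, (∏ j ∈ Finset.univ.erase i, A x (σ j) j) * A' (σ i) i) x :=
    .fun_sum fun σ _ => .const_mul _ <| .fun_finsetProd fun i _ => hA (σ i) i
  simp only [det_apply']
  convert leibniz using 1
  simp only [trace_adjugate_mul_eq_sum_det_updateCol, det_updateCol_eq_sum_perm, col_apply,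
    Finset.mul_sum]
  exact Finset.sum_comm

end Jacobi

/-- A square matrix is permutation invariant if permuting its rows and its columns by the same
permutation does not change it. It abstracts the symmetry of a complete graph with equal weights. -/
def IsPermInvariant {ι R : Type*} (A : Matrix ι ι R) : Prop :=
  ∀ σ : Perm ι, A.submatrix σ σ = A

namespace IsPermInvariant

variable {ι R : Type*} {A B : Matrix ι ι R}

theorem apply_self_eq (hA : IsPermInvariant A) (i j : ι) : A i i = A j j := by
  classical
  simpa using congr_fun₂ (hA (swap j i)) j j

theorem apply_eq_of_ne (hA : IsPermInvariant A) {i j k l : ι} (hij : i ≠ j) (hkl : k ≠ l) :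
    A i j = A k l := by
  obtain ⟨σ, rfl, rfl⟩ :=
    MulAction.is_two_pretransitive_iff.mp (Perm.isMultiplyPretransitive ι 2) hkl hij
  exact congr_fun₂ (hA σ) k l

theorem add [Add R] (hA : IsPermInvariant A) (hB : IsPermInvariant B) :
    IsPermInvariant (A + B) := fun σ => by
  rw [submatrix_add, Pi.add_apply, Pi.add_apply, hA σ, hB σ]

theorem adjugate [Fintype ι] [DecidableEq ι] [CommRing R] (hA : IsPermInvariant A) :
    IsPermInvariant A.adjugate := fun σ => by
  rw [← adjugate_submatrix_equiv_self, hA σ]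

end IsPermInvariant

theorem isPermInvariant_iff_exists_smul_one_add_smul {ι R : Type*} [DecidableEq ι] [Ring R]
    {A : Matrix ι ι R} :
    IsPermInvariant A ↔ ∃ a b : R, A = a • 1 + b • of fun _ _ => 1 := by
  constructor
  · intro hA
    rcases subsingleton_or_nontrivial ι with _ | _
    · rcases isEmpty_or_nonempty ι with _ | ⟨⟨i⟩⟩
      · exact ⟨0, 0, Subsingleton.elim _ _⟩
      · refine ⟨A i i, 0, ?_⟩
        ext k l
        simp [Subsingleton.elim k i, Subsingleton.elim l i]
    · obtain ⟨i, j, hij⟩ := exists_pair_ne ι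
      refine ⟨A i i - A i j, A i j, ?_⟩
      ext k l
      rcases eq_or_ne k l with rfl | hkl
      · simp [hA.apply_self_eq k i]
      · simp [hkl, hA.apply_eq_of_ne hkl hij]
  · rintro ⟨a, b, rfl⟩ σ
    ext i j
    simp [one_apply]

theorem isPermInvariant_of_offDiag_eq_of_row_sum_eq {ι R : Type*} [Fintype ι] [Ring R]
    {A : Matrix ι ι R} {c s : R} (hoff : ∀ i j, i ≠ j → A i j = c)
    (hrow : ∀ i, ∑ j, A i j = s) : IsPermInvariant A := by
  classical
  refine isPermInvariant_iff_exists_smul_one_add_smul.mpr ⟨s - ∑ _j : ι, c, c, ?_⟩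
  ext i j
  rcases eq_or_ne i j with rfl | hij
  · have diag : s - ∑ _j : ι, c = A i i - c := by
      rw [← hrow i, ← Finset.sum_sub_distrib]
      exact Finset.sum_eq_single i (fun j _ hji => by rw [hoff i j hji.symm, sub_self]) (by simp)
    rw [diag]
    simp
  · simp [hij, hoff i j hij]

namespace IsPermInvariant

variable {ι : Type*} [Fintype ι]

theorem trace_mul_eq_zero {R : Type*} [Ring R] {A B : Matrix ι ι R} (hA : IsPermInvariant A)
    (htr : B.trace = 0) (hsum : ∑ i, ∑ j, B i j = 0) : (A * B).trace = 0 := by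
  classical
  obtain ⟨a, b, rfl⟩ := isPermInvariant_iff_exists_smul_one_add_smul.mp hA
  have trace_ones_mul : ((of fun _ _ : ι => (1 : R)) * B).trace = 0 :=
    calc ((of fun _ _ : ι => (1 : R)) * B).trace = ∑ j, ∑ i, B i j := by
          simp only [trace, diag_apply, mul_apply, of_apply, one_mul]
      _ = 0 := Finset.sum_comm.trans hsum
  rw [add_mul, smul_mul_assoc, smul_mul_assoc, one_mul, trace_add, trace_smul, trace_smul, htr,
    trace_ones_mul, smul_zero, smul_zero, add_zero]

theorem hasDerivAt_det_zero [DecidableEq ι] {𝕜 𝔸 : Type*} [NontriviallyNormedField 𝕜]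
    [NormedCommRing 𝔸] [NormedAlgebra 𝕜 𝔸] {A : 𝕜 → Matrix ι ι 𝔸} {A' : Matrix ι ι 𝔸} {x : 𝕜}
    (hinv : IsPermInvariant (A x)) (hA : ∀ i j, HasDerivAt (fun t => A t i j) (A' i j) x)
    (htr : A'.trace = 0) (hsum : ∑ i, ∑ j, A' i j = 0) :
    HasDerivAt (fun t => (A t).det) 0 x := by
  simpa only [hinv.adjugate.trace_mul_eq_zero htr hsum] using hasDerivAt_det_of_entries hA

end IsPermInvariant

theorem deriv_det_modified_laplacian_complete_general
    {ι 𝕜 𝔸 : Type*} [Fintype ι] [DecidableEq ι] [NontriviallyNormedField 𝕜] [NormedCommRing 𝔸]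
    [NormedAlgebra 𝕜 𝔸] {L : 𝕜 → Matrix ι ι 𝔸} {L' : Matrix ι ι 𝔸} {x : 𝕜} {c : 𝔸} (t : 𝔸)
    (hL : ∀ i j, HasDerivAt (fun ε => L ε i j) (L' i j) x)
    (hrow : ∀ᶠ ε in 𝓝 x, ∀ i, ∑ j, L ε i j = 0)
    (hLx : ∀ i j, i ≠ j → L x i j = c)
    (htr : L'.trace = 0) :
    HasDerivAt (fun ε => (L ε + t • of fun _ _ => (1 : 𝔸)).det) 0 x := by
  have hrow' (i : ι) : ∑ j, L' i j = 0 :=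
    (HasDerivAt.fun_sum fun j _ => hL i j).unique <|
      (hasDerivAt_const x 0).congr_of_eventuallyEq (hrow.mono fun _ h => h i)
  have hinv_L : IsPermInvariant (L x) :=
    isPermInvariant_of_offDiag_eq_of_row_sum_eq hLx hrow.self_of_nhds
  have hinv_J : IsPermInvariant (t • of fun _ _ : ι => (1 : 𝔸)) := fun _ => rfl
  exact IsPermInvariant.hasDerivAt_det_zero (A := fun ε => L ε + t • of fun _ _ => 1)
    (hinv_L.add hinv_J) (fun i j => (hL i j).add_const _) htr
    (Finset.sum_eq_zero fun i _ => hrow' i)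

/-- Let `L(ε)` be a family of symmetric matrices, differentiable at `ε = 0`, whose rows sum to
zero, with `L(0)` the cotan-Laplacian of the equilateral triangulation on the complete graph
(`L(0)_ij = -2/√3` off the diagonal), with negative off-diagonal entries near `ε = 0` and with
`tr L'(0) = 0`. Then `ε ↦ det(L(ε) + n⁻¹ J)`, which near `0` equals the product of the nonzero
eigenvalues of `L(ε)`, has derivative zero at `ε = 0`. -/
theorem deriv_det_modified_laplacian_complete
    (n : ℕ) (hn : 2 ≤ n)
    (L : ℝ → Matrix (Fin n) (Fin n) ℝ)
    (hsymm : ∀ ε : ℝ, (L ε).IsSymm)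
    (hdiff : ∀ i j : Fin n, DifferentiableAt ℝ (fun ε => L ε i j) 0)
    (hrow : ∀ (ε : ℝ) (i : Fin n), ∑ j : Fin n, L ε i j = 0)
    (hL0 : ∀ i j : Fin n, i ≠ j → L 0 i j = -(2 / Real.sqrt 3))
    (hneg : ∀ᶠ ε in nhds (0 : ℝ), ∀ i j : Fin n, i ≠ j → L ε i j < 0)
    (htr : Matrix.trace (Matrix.of fun i j => deriv (fun ε => L ε i j) 0) = 0) :
    HasDerivAt
      (fun ε => Matrix.det
        (L ε + ((n : ℝ))⁻¹ • (Matrix.of fun _ _ => (1 : ℝ))))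
      0 0 :=
  deriv_det_modified_laplacian_complete_general _ (fun i j => (hdiff i j).hasDerivAt)
    (.of_forall hrow) hL0 htr
end
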